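/- For every (t₁, t₂, t₃, t₁₂, t₂₃, t₁₃) ∈ ℂ⁶, there exist matrices ξ₁, ξ₂, ξ₃ in SL(2,ℂ) with tr(ξᵢ) = tᵢ for i = 1,2,3 and tr(ξ₁ξ₂) = t₁₂, tr(ξ₂ξ₃) = t₂₃, tr(ξ₁ξ₃) = t₁₃. -/

import Mathlib

open Matrix

abbrev SL2C := Matrix.SpecialLinearGroup (Fin 2) ℂ

noncomputable def trC (g : SL2C) : ℂ := Matrix.trace (g : Matrix (Fin 2) (Fin 2) ℂ)

/-- Build an element of SL(2,ℂ) from its entries. -/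
noncomputable def mkSL (a b c d : ℂ) (h : a * d - b * c = 1) : SL2C :=
  ⟨!![a, b; c, d], by rw [Matrix.det_fin_two_of]; exact h⟩

theorem trC_mkSL (a b c d : ℂ) (h : a * d - b * c = 1) :
    trC (mkSL a b c d h) = a + d := by
  simp [trC, mkSL, Matrix.trace_fin_two]

theorem trC_mkSL_mul (a b c d : ℂ) (h : a * d - b * c = 1)
    (p q r s : ℂ) (h' : p * s - q * r = 1) :
    trC (mkSL a b c d h * mkSL p q r s h') = a * p + b * r + (c * q + d * s) := by
  unfold trC
  rw [Matrix.SpecialLinearGroup.coe_mul]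
  simp [mkSL, Matrix.trace_fin_two, Matrix.mul_apply, Fin.sum_univ_two]

theorem trC_mul_comm (x y : SL2C) : trC (x * y) = trC (y * x) := by
  simp only [trC, Matrix.SpecialLinearGroup.coe_mul]
  exact Matrix.trace_mul_comm _ _

theorem exists_quadratic_root (a b c : ℂ) (ha : a ≠ 0) : ∃ x : ℂ, a * x ^ 2 + b * x + c = 0 := by
  obtain ⟨s, hs⟩ := IsAlgClosed.exists_eq_mul_self (discrim a b c)
  obtain ⟨x, hx⟩ := exists_quadratic_eq_zero ha ⟨s, hs⟩
  exact ⟨x, by rw [pow_two]; exact hx⟩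

theorem exists_add_inv (t : ℂ) : ∃ z w : ℂ, z * w = 1 ∧ z + w = t := by
  obtain ⟨x, hx⟩ := exists_quadratic_root 1 (-t) 1 one_ne_zero
  exact ⟨x, t - x, by linear_combination -hx, by ring⟩

/-- The case where the pair (1,2) is irreducible. -/
theorem irreducible_case (t₁ t₂ t₃ t₁₂ t₂₃ t₁₃ : ℂ)
    (hk : t₁ ^ 2 + t₂ ^ 2 + t₁₂ ^ 2 - t₁ * t₂ * t₁₂ - 4 ≠ 0) :
    ∃ ξ₁ ξ₂ ξ₃ : SL2C,
      trC ξ₁ = t₁ ∧ trC ξ₂ = t₂ ∧ trC ξ₃ = t₃ ∧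
      trC (ξ₁ * ξ₂) = t₁₂ ∧ trC (ξ₂ * ξ₃) = t₂₃ ∧ trC (ξ₁ * ξ₃) = t₁₃ := by
  obtain ⟨z, w, hzw, rfl⟩ := exists_add_inv t₁₂
  obtain ⟨P, hP⟩ : ∃ P, P = t₂ - t₁ * w := ⟨_, rfl⟩
  obtain ⟨R, hR⟩ : ∃ R, R = z - w := ⟨_, rfl⟩
  have hdet : t₁ * P * R - P ^ 2 - R ^ 2 ≠ 0 := by
    intro h
    apply hk
    subst hP hR
    linear_combination -h + (4 - t₁ ^ 2) * hzw
  obtain ⟨p, r, hpr⟩ : ∃ p r : ℂ, R * r - P * p = t₂₃ + t₁₃ * w - t₂ * t₃ := by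
    by_cases h0 : R = 0
    · have hP0 : P ≠ 0 := by
        rintro h1
        apply hdet
        rw [h0, h1]; ring
      exact ⟨-(t₂₃ + t₁₃ * w - t₂ * t₃) / P, 0, by field_simp; ring⟩
    · exact ⟨0, (t₂₃ + t₁₃ * w - t₂ * t₃) / R, by field_simp; ring⟩
  obtain ⟨l, hl⟩ := exists_quadratic_root (t₁ * P * R - P ^ 2 - R ^ 2)
    (R * (t₃ - p) - p * R - (P - t₁ * R) * r - (t₁₃ - t₁ * p + r) * P)
    (p * (t₃ - p) - (t₁₃ - t₁ * p + r) * r - 1) hdet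
  refine ⟨mkSL t₁ (-1) 1 0 (by ring), mkSL 0 z (-w) t₂ (by linear_combination hzw),
    mkSL (p + l * R) (t₁₃ - t₁ * (p + l * R) + (r + l * P)) (r + l * P) (t₃ - (p + l * R))
      (by linear_combination hl), ?_, ?_, ?_, ?_, ?_, ?_⟩
  all_goals simp only [trC_mkSL, trC_mkSL_mul]
  · ring
  · ring
  · ring
  · ring
  · subst hP hR
    linear_combination hpr
  · ring

/-- A reducible trace triple is realised by the eigenvalues. -/
theorem reducible_eigen (a a' t₂ t₁₂ : ℂ) (ha : a * a' = 1)
    (hk : (a + a') ^ 2 + t₂ ^ 2 + t₁₂ ^ 2 - (a + a') * t₂ * t₁₂ - 4 = 0) :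
    ∃ b b' : ℂ, b * b' = 1 ∧ b + b' = t₂ ∧ a * b + a' * b' = t₁₂ := by
  obtain ⟨b, b', hb, rfl⟩ := exists_add_inv t₂
  have h : (t₁₂ - (a * b + a' * b')) * (t₁₂ - (a * b' + a' * b)) = 0 := by
    linear_combination hk + (b ^ 2 + b' ^ 2 - 2) * ha + (a ^ 2 + a' ^ 2 - 2) * hb
  rcases mul_eq_zero.mp h with h | h
  · exact ⟨b, b', hb, rfl, by linear_combination -h⟩
  · exact ⟨b', b, by rw [mul_comm]; exact hb, by ring, by linear_combination -h⟩

theorem six_trace_map_surjective (t₁ t₂ t₃ t₁₂ t₂₃ t₁₃ : ℂ) :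
    ∃ ξ₁ ξ₂ ξ₃ : SL2C,
      trC ξ₁ = t₁ ∧ trC ξ₂ = t₂ ∧ trC ξ₃ = t₃ ∧
      trC (ξ₁ * ξ₂) = t₁₂ ∧ trC (ξ₂ * ξ₃) = t₂₃ ∧ trC (ξ₁ * ξ₃) = t₁₃ := by
  by_cases h2 : t₁ ^ 2 + t₂ ^ 2 + t₁₂ ^ 2 - t₁ * t₂ * t₁₂ - 4 = 0
  · by_cases h3 : t₁ ^ 2 + t₃ ^ 2 + t₁₃ ^ 2 - t₁ * t₃ * t₁₃ - 4 = 0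
    · obtain ⟨a, a', ha, rfl⟩ := exists_add_inv t₁
      obtain ⟨b, b', hb, hb2, hb3⟩ := reducible_eigen a a' t₂ t₁₂ ha h2
      obtain ⟨c, c', hc, hc2, hc3⟩ := reducible_eigen a a' t₃ t₁₃ ha h3
      refine ⟨mkSL a 0 0 a' (by linear_combination ha),
        mkSL b 1 0 b' (by linear_combination hb),
        mkSL c 0 (t₂₃ - b * c - b' * c') c' (by linear_combination hc), ?_, ?_, ?_, ?_, ?_, ?_⟩
      all_goals simp only [trC_mkSL, trC_mkSL_mul]
      · exact hb2
      · exact hc2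
      · linear_combination hb3
      · ring
      · linear_combination hc3
    · obtain ⟨x, y, z, e1, e2, e3, e4, e5, e6⟩ := irreducible_case t₁ t₃ t₂ t₁₃ t₂₃ t₁₂ h3
      exact ⟨x, z, y, e1, e3, e2, e6, by rw [trC_mul_comm]; exact e5, e4⟩
  · exact irreducible_case t₁ t₂ t₃ t₁₂ t₂₃ t₁₃ h2
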